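/- arXiv:2405.18962 — 2 statements merged into one kernel-verified Lean document; each statement's English description precedes it below -/
import Mathlib

section
/- For k ∈ [0,T−1] there exist subspaces 𝒮_i ⊆ ℝ^{1×(i+1)(m+p)}, i ∈ [0,k], such that leftkernel(H_k) = (⊕_{i=0}^{k} σ^{k−i} 𝒮_i) ⊕ (leftkernel(G_k) × {0}^p), and dim 𝒮_k = δ_{k−1} − δ_k, where σ is the shift that prepends a zero m-block and a zero p-block to the input part and output part of a left-kernel vector respectively. -/
open Matrix
noncomputable section

/-- Block Hankel matrix of depth k+1 built from f_0, ..., f_{T-1}. -/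
def hankel {r T : ℕ} (f : Fin T → Fin r → ℝ) (k : ℕ) :
    Matrix (Fin (k + 1) × Fin r) (Fin (T - k)) ℝ :=
  Matrix.of fun ia j =>
    f ⟨(ia.1 : ℕ) + (j : ℕ), by have h1 := ia.1.isLt; have h2 := j.isLt; omega⟩ ia.2

/-- H_k : Hankel matrix of depth k+1 of the stacked data (u; y). -/
def Hmat {m p T : ℕ} (u : Fin T → Fin m → ℝ) (y : Fin T → Fin p → ℝ) (k : ℕ) :
    Matrix ((Fin (k + 1) × Fin m) ⊕ (Fin (k + 1) × Fin p)) (Fin (T - k)) ℝ :=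
  Matrix.fromRows (hankel u k) (hankel y k)

/-- G_k : H_k with its last p rows (the y_k block) deleted. -/
def Gmat {m p T : ℕ} (u : Fin T → Fin m → ℝ) (y : Fin T → Fin p → ℝ) (k : ℕ) :
    Matrix ((Fin (k + 1) × Fin m) ⊕ (Fin k × Fin p)) (Fin (T - k)) ℝ :=
  Matrix.fromRows (hankel u k)
    (Matrix.of fun ia j =>
      y ⟨(ia.1 : ℕ) + (j : ℕ), by have h1 := ia.1.isLt; have h2 := j.isLt; omega⟩ ia.2)

/-- δ_k = rank H_k − rank G_k. -/
def delta {m p T : ℕ} (u : Fin T → Fin m → ℝ) (y : Fin T → Fin p → ℝ) (k : ℕ) : ℕ :=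
  (Hmat u y k).rank - (Gmat u y k).rank

/-- The left kernel of a matrix: row vectors v with v M = 0. -/
def leftKernel {ι κ : Type*} [Fintype ι] (M : Matrix ι κ ℝ) : Submodule ℝ (ι → ℝ) :=
  LinearMap.ker M.vecMulLinear

/-- Row-index type of the depth-(k+1) data Hankel matrix H_k. -/
abbrev IdxH (m p k : ℕ) := (Fin (k + 1) × Fin m) ⊕ (Fin (k + 1) × Fin p)

/-- Row-index type of G_k (H_k with last p rows deleted). -/
abbrev IdxG (m p k : ℕ) := (Fin (k + 1) × Fin m) ⊕ (Fin k × Fin p)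

/-- The shift σ: prepend a zero m-block to the input part and a zero p-block to the
output part of a left-kernel row vector. -/
def shiftL (m p j : ℕ) : (IdxH m p j → ℝ) →ₗ[ℝ] (IdxH m p (j + 1) → ℝ) where
  toFun v := Sum.elim
    (fun ia => if h : (ia.1 : ℕ) = 0 then 0
      else v (Sum.inl (⟨(ia.1 : ℕ) - 1, by have := ia.1.isLt; omega⟩, ia.2)))
    (fun ia => if h : (ia.1 : ℕ) = 0 then 0
      else v (Sum.inr (⟨(ia.1 : ℕ) - 1, by have := ia.1.isLt; omega⟩, ia.2)))
  map_add' v w := by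
    funext z
    cases z <;> simp only [Sum.elim_inl, Sum.elim_inr, Pi.add_apply] <;>
      split <;> simp
  map_smul' c v := by
    funext z
    cases z <;> simp only [Sum.elim_inl, Sum.elim_inr, Pi.smul_apply, RingHom.id_apply,
      smul_eq_mul] <;> split <;> simp

/-- σ^t applied to a subspace of level-j left-kernel vectors. -/
def shiftIter (m p j : ℕ) : (t : ℕ) → Submodule ℝ (IdxH m p j → ℝ) →
    Submodule ℝ (IdxH m p (j + t) → ℝ)
  | 0, S => S
  | t + 1, S => Submodule.map (shiftL m p (j + t)) (shiftIter m p j t S)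

/-- Embedding of G_k-row vectors into H_k-row vectors by appending p zeros
(the y_k block): realizes leftkernel(G_k) × {0}^p. -/
def embedG (m p k : ℕ) : (IdxG m p k → ℝ) →ₗ[ℝ] (IdxH m p k → ℝ) where
  toFun v := Sum.elim
    (fun ia => v (Sum.inl ia))
    (fun ia => if h : (ia.1 : ℕ) < k then v (Sum.inr (⟨(ia.1 : ℕ), h⟩, ia.2)) else 0)
  map_add' v w := by
    funext z
    cases z <;> simp only [Sum.elim_inl, Sum.elim_inr, Pi.add_apply] <;>
      first | rfl | (split <;> simp)
  map_smul' c v := by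
    funext z
    cases z <;> simp only [Sum.elim_inl, Sum.elim_inr, Pi.smul_apply, RingHom.id_apply,
      smul_eq_mul] <;> first | rfl | (split <;> simp)

/-- δ extended with δ_{-1} = p: `deltaExt u y (k+1) = δ_k`, `deltaExt u y 0 = p`. -/
def deltaExt {m p T : ℕ} (u : Fin T → Fin m → ℝ) (y : Fin T → Fin p → ℝ) : ℕ → ℕ
  | 0 => p
  | j + 1 => delta u y j

/-!
Choose `𝒮_0` as a complement of `leftker G_0 × {0}^p` in `leftker H_0`, and `𝒮_{k+1}` as a
complement of `σ leftker H_k + leftker G_{k+1} × {0}^p` in `leftker H_{k+1}`. By induction,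
`leftker H_k` splits into the shifted `𝒮_i` and `leftker G_k × {0}^p`: applying the injective map
`σ` keeps the shifted `𝒮_i` independent, and they stay disjoint from `leftker G_{k+1} × {0}^p`
because `σ leftker H_k ∩ (leftker G_{k+1} × {0}^p) = σ (leftker G_k × {0}^p)`.
The same identity gives the dimension of the sum being complemented, and rank–nullity gives
`dim leftker H_k + δ_k = dim leftker G_k + p`.
-/

theorem iSupIndep_of_disjoint_iSup {α ι κ : Type*} [CompleteLattice α] [IsModularLattice α]
    {f : κ → α} {e : ι → κ} {x₀ : κ} (hcover : ∀ x, x = x₀ ∨ x ∈ Set.range e)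
    (hindep : iSupIndep fun i => f (e i)) (hdisj : Disjoint (⨆ i, f (e i)) (f x₀)) :
    iSupIndep f := by
  intro x
  rcases hcover x with rfl | ⟨i, rfl⟩
  · refine hdisj.symm.mono_right (iSup₂_le fun x' hx' => ?_)
    obtain ⟨i, rfl⟩ := (hcover x').resolve_left hx'
    exact le_iSup (fun i => f (e i)) i
  · have hothers : ⨆ (x') (_ : x' ≠ e i), f x' ≤ (⨆ (i') (_ : i' ≠ i), f (e i')) ⊔ f x₀ := by
      refine iSup₂_le fun x' hx' => ?_
      rcases hcover x' with rfl | ⟨i', rfl⟩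
      · exact le_sup_right
      · exact le_sup_of_le_left (le_iSup₂_of_le i' (ne_of_apply_ne e hx') le_rfl)
    have htotal : f (e i) ⊔ ⨆ (i') (_ : i' ≠ i), f (e i') ≤ ⨆ i, f (e i) :=
      sup_le (le_iSup (fun i => f (e i)) i) (iSup₂_le fun i' _ => le_iSup (fun i => f (e i)) i')
    exact ((hindep i).disjoint_sup_right_of_disjoint_sup_left
      (hdisj.mono_left htotal)).mono_right hothers

section Tower

variable {R : Type*} {V : ℕ → Type*} [Ring R] [∀ k, AddCommGroup (V k)] [∀ k, Module R (V k)]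

/-- The composite `V i → V (i + 1) → ⋯ → V k` of the connecting maps of a tower of modules, i.e. the
power `σ^(k - i)`. -/
def towerMap (σ : ∀ k, V k →ₗ[R] V (k + 1)) {i k : ℕ} (h : i ≤ k) : V i →ₗ[R] V k :=
  Nat.leRec (motive := fun k _ => V i →ₗ[R] V k) LinearMap.id (fun l _ f => σ l ∘ₗ f) h

/-- The subspace `σ^(k - i) 𝒮_i` of `V k`, for `i ≤ k`. -/
def shifted (σ : ∀ k, V k →ₗ[R] V (k + 1)) (S : ∀ k, Submodule R (V k)) (k : ℕ)
    (i : Fin (k + 1)) : Submodule R (V k) :=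
  (S i).map (towerMap σ i.is_le)

/-- The part of `L k` accounted for by `N k` and by the shift of the previous `L`; the subspaces
`𝒮_k` of the decomposition are complements of it in `L k`. -/
def inherited (σ : ∀ k, V k →ₗ[R] V (k + 1)) (L N : ∀ k, Submodule R (V k)) :
    ∀ k, Submodule R (V k)
  | 0 => N 0
  | k + 1 => (L k).map (σ k) ⊔ N (k + 1)

variable (σ : ∀ k, V k →ₗ[R] V (k + 1)) (S : ∀ k, Submodule R (V k))

theorem towerMap_refl (k : ℕ) : towerMap σ (le_refl k) = LinearMap.id :=
  Nat.leRec_self _ _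

theorem towerMap_succ {i k : ℕ} (h : i ≤ k) :
    towerMap σ (h.trans k.le_succ) = σ k ∘ₗ towerMap σ h :=
  Nat.leRec_succ _ _ h

theorem shifted_last (k : ℕ) : shifted σ S k (Fin.last k) = S k := by
  change (S k).map (towerMap σ (le_refl k)) = S k
  rw [towerMap_refl, Submodule.map_id]

theorem shifted_castSucc (k : ℕ) (i : Fin (k + 1)) :
    shifted σ S (k + 1) i.castSucc = (shifted σ S k i).map (σ k) := by
  rw [shifted, shifted, ← Submodule.map_comp, ← towerMap_succ]
  rfl

theorem iSup_shifted_zero : ⨆ i, shifted σ S 0 i = S 0 :=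
  (iSup_unique (ι := Fin 1) _).trans (shifted_last σ S 0)

theorem iSup_shifted_succ (k : ℕ) :
    ⨆ i, shifted σ S (k + 1) i = (⨆ i, shifted σ S k i).map (σ k) ⊔ S (k + 1) := by
  rw [← finSuccEquivLast.symm.iSup_comp, iSup_option, sup_comm, Submodule.map_iSup]
  simp only [finSuccEquivLast_symm_some, finSuccEquivLast_symm_none, shifted_castSucc,
    shifted_last]

variable {σ S} {L N : ∀ k, Submodule R (V k)}

theorem iSup_shifted_sup (hinf : ∀ k, (L k).map (σ k) ⊓ N (k + 1) = (N k).map (σ k))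
    (hsup : ∀ k, inherited σ L N k ⊔ S k = L k) (k : ℕ) :
    (⨆ i, shifted σ S k i) ⊔ N k = L k := by
  induction k with
  | zero => rw [iSup_shifted_zero, sup_comm]; exact hsup 0
  | succ k ih =>
    have hN : (N k).map (σ k) ≤ N (k + 1) := (hinf k).ge.trans inf_le_right
    rw [iSup_shifted_succ, sup_right_comm, ← sup_eq_right.2 hN, ← sup_assoc, ← Submodule.map_sup,
      ih]
    exact hsup (k + 1)

theorem iSup_shifted_le (hinf : ∀ k, (L k).map (σ k) ⊓ N (k + 1) = (N k).map (σ k))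
    (hsup : ∀ k, inherited σ L N k ⊔ S k = L k) (k : ℕ) : ⨆ i, shifted σ S k i ≤ L k :=
  le_sup_left.trans (iSup_shifted_sup hinf hsup k).le

theorem disjoint_iSup_shifted (hσ : ∀ k, Function.Injective (σ k))
    (hinf : ∀ k, (L k).map (σ k) ⊓ N (k + 1) = (N k).map (σ k))
    (hdisj : ∀ k, Disjoint (inherited σ L N k) (S k))
    (hsup : ∀ k, inherited σ L N k ⊔ S k = L k) (k : ℕ) :
    Disjoint (⨆ i, shifted σ S k i) (N k) := by
  induction k with
  | zero => rw [iSup_shifted_zero]; exact (hdisj 0).symm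
  | succ k ih =>
    have hA : (⨆ i, shifted σ S k i).map (σ k) ≤ (L k).map (σ k) :=
      Submodule.map_mono (iSup_shifted_le hinf hsup k)
    have hAN : Disjoint ((⨆ i, shifted σ S k i).map (σ k)) (N (k + 1)) := by
      rw [disjoint_iff_inf_le]
      calc (⨆ i, shifted σ S k i).map (σ k) ⊓ N (k + 1)
          ≤ (⨆ i, shifted σ S k i).map (σ k) ⊓ (N k).map (σ k) :=
            le_inf inf_le_left ((inf_le_inf_right _ hA).trans (hinf k).le)
        _ = ⊥ := by rw [← Submodule.map_inf _ (hσ k), ih.eq_bot, Submodule.map_bot]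
    rw [iSup_shifted_succ, sup_comm]
    exact hAN.disjoint_sup_left_of_disjoint_sup_right
      ((hdisj (k + 1)).symm.mono_right (sup_le_sup_right hA _))

theorem iSupIndep_shifted (hσ : ∀ k, Function.Injective (σ k))
    (hinf : ∀ k, (L k).map (σ k) ⊓ N (k + 1) = (N k).map (σ k))
    (hdisj : ∀ k, Disjoint (inherited σ L N k) (S k))
    (hsup : ∀ k, inherited σ L N k ⊔ S k = L k) (k : ℕ) : iSupIndep (shifted σ S k) := by
  induction k with
  | zero => exact iSupIndep_subsingleton (ι := Fin 1) _
  | succ k ih =>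
    refine iSupIndep_of_disjoint_iSup (x₀ := Fin.last (k + 1)) (e := Fin.castSucc)
      (Fin.lastCases (.inl rfl) fun i => .inr ⟨i, rfl⟩) ?_ ?_
    · simp only [shifted_castSucc]
      exact (σ k).iSupIndep_map (hσ k) ih
    · simp only [shifted_castSucc, shifted_last]
      rw [← Submodule.map_iSup]
      exact (hdisj (k + 1)).mono_left
        (le_sup_of_le_left (Submodule.map_mono (iSup_shifted_le hinf hsup k)))

end Tower

theorem finrank_map_sup_add_finrank {K V W : Type*} [DivisionRing K] [AddCommGroup V] [Module K V]
    [AddCommGroup W] [Module K W] {f : V →ₗ[K] W} (hf : Function.Injective f)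
    {L N : Submodule K V} {P : Submodule K W} [FiniteDimensional K L] [FiniteDimensional K P]
    (h : L.map f ⊓ P = N.map f) :
    Module.finrank K ↥(L.map f ⊔ P) + Module.finrank K N =
      Module.finrank K L + Module.finrank K P := by
  have := Submodule.finrank_sup_add_finrank_inf_eq (L.map f) P
  rwa [h, ← (Submodule.equivMapOfInjective f hf L).finrank_eq,
    ← (Submodule.equivMapOfInjective f hf N).finrank_eq] at this

theorem rank_add_finrank_leftKernel {ι κ : Type*} [Fintype ι] [Fintype κ] (M : Matrix ι κ ℝ) :
    M.rank + Module.finrank ℝ (leftKernel M) = Fintype.card ι := by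
  rw [M.rank_eq_finrank_span_row, ← range_vecMulLinear, leftKernel,
    LinearMap.finrank_range_add_finrank_ker, Module.finrank_fintype_fun_eq_card]

section Embedding

variable {m p k : ℕ}

theorem embedG_injective : Function.Injective (embedG m p k) := by
  intro v w h
  funext z
  rcases z with z | ⟨i, a⟩
  · exact congrFun h (Sum.inl z)
  · simpa [embedG] using congrFun h (Sum.inr (i.castSucc, a))

theorem mem_range_embedG {v : IdxH m p k → ℝ} :
    v ∈ LinearMap.range (embedG m p k) ↔ ∀ a, v (Sum.inr (Fin.last k, a)) = 0 := by
  constructor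
  · rintro ⟨w, rfl⟩ a
    simp [embedG]
  · intro hv
    refine ⟨Sum.elim (fun z => v (Sum.inl z)) fun z => v (Sum.inr (z.1.castSucc, z.2)), ?_⟩
    funext z
    rcases z with z | ⟨i, a⟩
    · rfl
    · induction i using Fin.lastCases with
      | last => simp [embedG, hv]
      | cast i => simp [embedG]

theorem shiftL_injective : Function.Injective (shiftL m p k) := by
  intro v w h
  funext z
  rcases z with ⟨i, a⟩ | ⟨i, a⟩
  · simpa [shiftL] using congrFun h (Sum.inl (i.succ, a))
  · simpa [shiftL] using congrFun h (Sum.inr (i.succ, a))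

theorem shiftL_mem_range_embedG_iff {v : IdxH m p k → ℝ} :
    shiftL m p k v ∈ LinearMap.range (embedG m p (k + 1)) ↔
      v ∈ LinearMap.range (embedG m p k) := by
  rw [mem_range_embedG, mem_range_embedG]
  rfl

theorem cast_shiftIter_eq_map_towerMap {i t : ℕ} (h : i + t = k)
    (S : Submodule ℝ (IdxH m p i → ℝ)) :
    cast (congrArg (fun t => Submodule ℝ (IdxH m p t → ℝ)) h) (shiftIter m p i t S) =
      S.map (towerMap (shiftL m p) (h ▸ Nat.le_add_right i t)) := by
  subst h
  rw [cast_eq]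
  induction t with
  | zero => rw [shiftIter, towerMap_refl]; exact (Submodule.map_id S).symm
  | succ t ih => rw [shiftIter, ih, ← Submodule.map_comp, ← towerMap_succ]

end Embedding

section Hankel

variable {m p T : ℕ} (u : Fin T → Fin m → ℝ) (y : Fin T → Fin p → ℝ)

/-- The left kernel of `H_k`, as a family indexed by the depth `k`. -/
abbrev leftKernelH (k : ℕ) : Submodule ℝ (IdxH m p k → ℝ) :=
  leftKernel (Hmat u y k)

/-- The subspace `leftker G_k × {0}^p` of row vectors of `H_k`. -/
abbrev paddedLeftKernelG (k : ℕ) : Submodule ℝ (IdxH m p k → ℝ) :=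
  (leftKernel (Gmat u y k)).map (embedG m p k)

/-- The part of `leftker H_k` coming from smaller matrices: `leftker G_0 × {0}^p` for `k = 0`, and
`σ leftker H_{k-1} + leftker G_k × {0}^p` for `k > 0`. -/
abbrev inheritedLeftKernel (k : ℕ) : Submodule ℝ (IdxH m p k → ℝ) :=
  inherited (shiftL m p) (leftKernelH u y) (paddedLeftKernelG u y) k

theorem vecMul_Hmat_apply {k : ℕ} (v : IdxH m p k → ℝ) (j : Fin (T - k)) :
    (v ᵥ* Hmat u y k) j =
      (∑ i : Fin (k + 1), ∑ a, v (Sum.inl (i, a)) * u ⟨i + j, by omega⟩ a) +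
        ∑ i : Fin (k + 1), ∑ a, v (Sum.inr (i, a)) * y ⟨i + j, by omega⟩ a := by
  simp only [vecMul, dotProduct, Fintype.sum_sum_type, Fintype.sum_prod_type, Hmat, hankel,
    fromRows_apply_inl, fromRows_apply_inr, of_apply]

theorem vecMul_embedG {k : ℕ} (w : IdxG m p k → ℝ) :
    embedG m p k w ᵥ* Hmat u y k = w ᵥ* Gmat u y k := by
  funext j
  rw [vecMul_Hmat_apply, Fin.sum_univ_castSucc (fun i => ∑ a, embedG m p k w (Sum.inr (i, a)) * _)]
  simp [embedG, vecMul, dotProduct, Fintype.sum_sum_type, Fintype.sum_prod_type, Gmat, hankel]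

theorem vecMul_shiftL_apply {k : ℕ} (v : IdxH m p k → ℝ) (j : Fin (T - (k + 1))) :
    (shiftL m p k v ᵥ* Hmat u y (k + 1)) j = (v ᵥ* Hmat u y k) ⟨j + 1, by omega⟩ := by
  rw [vecMul_Hmat_apply, vecMul_Hmat_apply,
    Fin.sum_univ_succ (fun i => ∑ a, shiftL m p k v (Sum.inl (i, a)) * _),
    Fin.sum_univ_succ (fun i => ∑ a, shiftL m p k v (Sum.inr (i, a)) * _)]
  simp [shiftL, add_assoc, add_comm 1]

theorem map_shiftL_leftKernelH_le (k : ℕ) :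
    (leftKernelH u y k).map (shiftL m p k) ≤ leftKernelH u y (k + 1) := by
  rintro _ ⟨v, hv, rfl⟩
  exact funext fun j => (vecMul_shiftL_apply u y v j).trans (congrFun hv _)

theorem paddedLeftKernelG_eq_range_inf (k : ℕ) :
    paddedLeftKernelG u y k = LinearMap.range (embedG m p k) ⊓ leftKernelH u y k := by
  have hcomap : (leftKernelH u y k).comap (embedG m p k) = leftKernel (Gmat u y k) := by
    ext w
    exact (vecMul_embedG u y w).congr_left
  rw [paddedLeftKernelG, ← hcomap, Submodule.map_comap_eq]

theorem map_shiftL_leftKernelH_inf_paddedLeftKernelG (k : ℕ) :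
    (leftKernelH u y k).map (shiftL m p k) ⊓ paddedLeftKernelG u y (k + 1) =
      (paddedLeftKernelG u y k).map (shiftL m p k) := by
  rw [paddedLeftKernelG_eq_range_inf, paddedLeftKernelG_eq_range_inf]
  ext x
  constructor
  · rintro ⟨⟨v, hv, rfl⟩, hrange, -⟩
    exact ⟨v, ⟨shiftL_mem_range_embedG_iff.1 hrange, hv⟩, rfl⟩
  · rintro ⟨v, ⟨hrange, hv⟩, rfl⟩
    have hshift := Submodule.mem_map_of_mem (f := shiftL m p k) hv
    exact ⟨hshift, shiftL_mem_range_embedG_iff.2 hrange, map_shiftL_leftKernelH_le u y k hshift⟩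

theorem inheritedLeftKernel_le_leftKernelH :
    ∀ k, inheritedLeftKernel u y k ≤ leftKernelH u y k
  | 0 => (paddedLeftKernelG_eq_range_inf u y 0).trans_le inf_le_right
  | k + 1 => sup_le (map_shiftL_leftKernelH_le u y k)
      ((paddedLeftKernelG_eq_range_inf u y (k + 1)).trans_le inf_le_right)

theorem rank_Gmat_le_rank_Hmat (k : ℕ) : (Gmat u y k).rank ≤ (Hmat u y k).rank := by
  have hsub : Gmat u y k = (Hmat u y k).submatrix (Sum.map id (Prod.map Fin.castSucc id)) id := by
    ext z j
    rcases z with z | z <;> rfl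
  rw [hsub]
  exact rank_submatrix_le _ _ _

theorem finrank_leftKernelH_add_delta (k : ℕ) :
    Module.finrank ℝ (leftKernelH u y k) + delta u y k =
      Module.finrank ℝ (paddedLeftKernelG u y k) + p := by
  have hH : _ + Module.finrank ℝ (leftKernelH u y k) = _ := rank_add_finrank_leftKernel (Hmat u y k)
  have hG := rank_add_finrank_leftKernel (Gmat u y k)
  have hpad : Module.finrank ℝ (leftKernel (Gmat u y k)) =
      Module.finrank ℝ (paddedLeftKernelG u y k) :=
    (Submodule.equivMapOfInjective _ embedG_injective _).finrank_eq
  have hle := rank_Gmat_le_rank_Hmat u y k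
  simp only [Fintype.card_sum, Fintype.card_prod, Fintype.card_fin, add_mul, one_mul] at hH hG
  rw [delta]
  omega

theorem finrank_inheritedLeftKernel_add_deltaExt (k : ℕ) :
    Module.finrank ℝ (inheritedLeftKernel u y k) + deltaExt u y k =
      Module.finrank ℝ (paddedLeftKernelG u y k) + p := by
  cases k with
  | zero => rfl
  | succ k =>
    have hsum : Module.finrank ℝ (inheritedLeftKernel u y (k + 1)) + _ = _ + _ :=
      finrank_map_sup_add_finrank shiftL_injective
        (map_shiftL_leftKernelH_inf_paddedLeftKernelG u y k)
    have hdelta := finrank_leftKernelH_add_delta u y k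
    rw [deltaExt]
    omega

theorem finrank_add_deltaExt_of_disjoint {k : ℕ} {S : Submodule ℝ (IdxH m p k → ℝ)}
    (hdisj : Disjoint (inheritedLeftKernel u y k) S)
    (hsup : inheritedLeftKernel u y k ⊔ S = leftKernelH u y k) :
    Module.finrank ℝ S + deltaExt u y (k + 1) = deltaExt u y k := by
  have hadd := Submodule.finrank_sup_add_finrank_inf_eq (inheritedLeftKernel u y k) S
  rw [hsup, hdisj.eq_bot, finrank_bot, add_zero] at hadd
  have hH : _ + deltaExt u y (k + 1) = _ := finrank_leftKernelH_add_delta u y k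
  have hinh := finrank_inheritedLeftKernel_add_deltaExt u y k
  omega

end Hankel

theorem stmt16 {m p T : ℕ}
    (u : Fin T → Fin m → ℝ) (y : Fin T → Fin p → ℝ)
    (k : ℕ) (hT : 1 ≤ T) (hk : k ≤ T - 1) :
    ∃ S : (i : Fin (k + 1)) → Submodule ℝ (IdxH m p (i : ℕ) → ℝ),
      ∃ F : Fin (k + 1) → Submodule ℝ (IdxH m p k → ℝ),
        (∀ i : Fin (k + 1),
          F i = cast
            (congrArg (fun t => Submodule ℝ (IdxH m p t → ℝ))
              (by have := i.isLt; omega : (i : ℕ) + (k - (i : ℕ)) = k))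
            (shiftIter m p (i : ℕ) (k - (i : ℕ)) (S i))) ∧
        iSupIndep
          (Sum.elim F fun _ : Unit =>
            Submodule.map (embedG m p k) (leftKernel (Gmat u y k))) ∧
        (⨆ j : Fin (k + 1) ⊕ Unit,
            Sum.elim F (fun _ : Unit =>
              Submodule.map (embedG m p k) (leftKernel (Gmat u y k))) j) =
          leftKernel (Hmat u y k) ∧
        Module.finrank ℝ ↥(S ⟨k, Nat.lt_succ_self k⟩) =
          deltaExt u y k - deltaExt u y (k + 1) := by
  choose S hdisj hsup using fun k =>
    IsModularLattice.exists_disjoint_and_sup_eq (inheritedLeftKernel_le_leftKernelH u y k)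
  have hinf := map_shiftL_leftKernelH_inf_paddedLeftKernelG u y
  have hσ : ∀ k, Function.Injective (shiftL m p k) := fun _ => shiftL_injective
  refine ⟨fun i => S i, shifted (shiftL m p) S k,
    fun i => (cast_shiftIter_eq_map_towerMap (by omega) (S i)).symm, ?_, ?_, ?_⟩
  · refine iSupIndep_of_disjoint_iSup (e := Sum.inl) (x₀ := Sum.inr ()) (by simp) ?_ ?_
    · exact iSupIndep_shifted hσ hinf hdisj hsup k
    · exact disjoint_iSup_shifted hσ hinf hdisj hsup k
  · rw [iSup_sum, iSup_unique (ι := Unit)]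
    exact iSup_shifted_sup hinf hsup k
  · exact Nat.eq_sub_of_add_eq (finrank_add_deltaExt_of_disjoint u y (hdisj k) (hsup k))
end
end

section
/- Define ℓ_min as the smallest lag and n_min as the smallest state dimension over all systems explaining the data, and q = min{k ∈ [0,T−1] : δ_k = 0}. Then ℓ_min = q and n_min = Σ_{i=0}^{ℓ_min} δ_i; moreover every explaining system with n_min states has lag ℓ_min and is observable. -/
open Matrix
noncomputable section

/-- `obsMat A C k` is the observability matrix Ω_k, the stack of C, CA, ..., CA^k. -/
def obsMat {ι : Type*} [Fintype ι] [DecidableEq ι] {p : ℕ}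
    (A : Matrix ι ι ℝ) (C : Matrix (Fin p) ι ℝ) (k : ℕ) :
    Matrix (Fin (k + 1) × Fin p) ι ℝ :=
  Matrix.of fun ir j => (C * A ^ (ir.1 : ℕ)) ir.2 j

/-- `obsRank A C (k+1) = rank Ω_k`; `obsRank A C 0 = rank Ω_{-1} = 0` (void matrix). -/
def obsRank {ι : Type*} [Fintype ι] [DecidableEq ι] {p : ℕ}
    (A : Matrix ι ι ℝ) (C : Matrix (Fin p) ι ℝ) : ℕ → ℕ
  | 0 => 0
  | k + 1 => (obsMat A C k).rank

/-- ρ_k = rank Ω_k − rank Ω_{k-1}. -/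
def rho {ι : Type*} [Fintype ι] [DecidableEq ι] {p : ℕ}
    (A : Matrix ι ι ℝ) (C : Matrix (Fin p) ι ℝ) (k : ℕ) : ℕ :=
  obsRank A C (k + 1) - obsRank A C k

/-- The lag ℓ(C,A): the smallest k ≥ 0 with rank Ω_k = rank Ω_{k-1}. -/
def lag {ι : Type*} [Fintype ι] [DecidableEq ι] {p : ℕ}
    (A : Matrix ι ι ℝ) (C : Matrix (Fin p) ι ℝ) : ℕ :=
  sInf {k | obsRank A C (k + 1) = obsRank A C k}

/-- (C,A) is observable iff rank Ω_{n-1} = n where n is the state dimension. -/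
def Observable {ι : Type*} [Fintype ι] [DecidableEq ι] {p : ℕ}
    (A : Matrix ι ι ℝ) (C : Matrix (Fin p) ι ℝ) : Prop :=
  obsRank A C (Fintype.card ι) = Fintype.card ι

/-- (A,B,C,D) explains the data (u,y) with state sequence x. -/
def Explains {ι : Type*} [Fintype ι] {m p T : ℕ}
    (A : Matrix ι ι ℝ) (B : Matrix ι (Fin m) ℝ)
    (C : Matrix (Fin p) ι ℝ) (D : Matrix (Fin p) (Fin m) ℝ)
    (u : Fin T → Fin m → ℝ) (y : Fin T → Fin p → ℝ) (x : Fin (T + 1) → ι → ℝ) : Prop :=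
  ∀ t : Fin T,
    x t.succ = A.mulVec (x t.castSucc) + B.mulVec (u t) ∧
    y t = C.mulVec (x t.castSucc) + D.mulVec (u t)


/-!
Let `W_k ⊆ ℝᵖ` be the space of output functionals predictable from a data window of length `k + 1`
with its last output removed. Then `δ_k = codim W_k`, and the `W_k` increase with `k` by time shift.

In a system explaining the data, the functionals `η` with `η C Aᵏ` in the row space of `Ω_{k-1}` are
predictable, and they form a space of codimension `ρ_k`. Hence `δ_k ≤ ρ_k` for all `k`, which bounds
the lag below by `q` and the state dimension below by `∑ δ_i`.

Conversely, choose a basis of `W_q = ℝᵖ` adapted to the flag `W_0 ⊆ ⋯ ⊆ W_q`. A functional which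
first becomes predictable at depth `d` is realized by a chain of `d` delays, and these depths add up
to `∑_{i < q} codim W_i = ∑ δ_i`. In any system with that many states, `rank Ω_{q-1}` is already the
state dimension, which forces the lag to be `q` and the system to be observable.
-/

section LinearAlgebra

open Module Submodule

lemma finrank_map_add_finrank_ker_of_le {K V E : Type*} [DivisionRing K] [AddCommGroup V]
    [Module K V] [AddCommGroup E] [Module K E] [FiniteDimensional K V] (φ : V →ₗ[K] E)
    {P : Submodule K V} (hP : LinearMap.ker φ ≤ P) :
    finrank K (P.map φ) + finrank K (LinearMap.ker φ) = finrank K P := by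
  rw [← LinearMap.finrank_range_add_finrank_ker (φ.domRestrict P), LinearMap.range_domRestrict,
    LinearMap.ker_domRestrict, (comapSubtypeEquivOfLe hP).finrank_eq]

lemma finrank_sup_range_add_finrank_comap {K V E : Type*} [DivisionRing K] [AddCommGroup V]
    [Module K V] [AddCommGroup E] [Module K E] [FiniteDimensional K V] [FiniteDimensional K E]
    (φ : V →ₗ[K] E) (S : Submodule K E) :
    finrank K ↥(S ⊔ LinearMap.range φ) + finrank K (S.comap φ) = finrank K S + finrank K V := by
  have hsup := finrank_sup_add_finrank_inf_eq S (LinearMap.range φ)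
  have hrank := LinearMap.finrank_range_add_finrank_ker φ
  have hcomap := finrank_map_add_finrank_ker_of_le φ (P := S.comap φ) (LinearMap.ker_le_comap φ)
  rw [map_comap_eq, inf_comm] at hcomap
  omega

lemma span_range_fin_succ_prod {R V α : Type*} [Semiring R] [AddCommMonoid V] [Module R V]
    {k : ℕ} (F : Fin (k + 1) × α → V) :
    span R (Set.range F) =
      span R (Set.range fun il : Fin k × α => F (il.1.castSucc, il.2)) ⊔
        span R (Set.range fun l => F (Fin.last k, l)) := by
  rw [← span_union]
  congr 1
  ext v
  simp only [Set.mem_range, Set.mem_union, Prod.exists, Fin.exists_iff_castSucc, or_comm]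

lemma exists_span_range_eq_of_flag {K V : Type*} [DivisionRing K] [AddCommGroup V] [Module K V]
    [FiniteDimensional K V] {W : ℕ → Submodule K V} (hW : Monotone W) (k : ℕ) :
    ∃ (κ : Type) (_ : Fintype κ) (v : κ → V) (d : κ → ℕ),
      (∀ j, v j ∈ W (d j)) ∧ span K (Set.range v) = W k ∧
        ∑ j, d j + ∑ i ∈ Finset.range k, finrank K (W i) = k * finrank K (W k) := by
  induction k with
  | zero =>
    obtain ⟨v, hv, hspan, -⟩ := exists_fun_fin_finrank_span_eq K (W 0 : Set V)
    exact ⟨_, inferInstance, v, fun _ => 0, hv, hspan.trans (span_eq _), by simp⟩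
  | succ k ih =>
    obtain ⟨κ, _, v, d, hmem, hspan, hsum⟩ := ih
    obtain ⟨U, hdisj, hsup⟩ := IsModularLattice.exists_disjoint_and_sup_eq (hW k.le_succ)
    obtain ⟨w, hw, hwspan, -⟩ := exists_fun_fin_finrank_span_eq K (U : Set V)
    replace hwspan := hwspan.trans (span_eq U)
    have hfinrank : finrank K (W (k + 1)) = finrank K (W k) + finrank K (span K (U : Set V)) := by
      rw [span_eq, ← hsup, ← finrank_sup_add_finrank_inf_eq, hdisj.eq_bot, finrank_bot, add_zero]
    refine ⟨κ ⊕ Fin _, inferInstance, Sum.elim v w, Sum.elim d fun _ => k + 1, ?_, ?_, ?_⟩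
    · exact Sum.forall.2 ⟨hmem, fun j => hsup.le (mem_sup_right (hw j))⟩
    · rw [Set.Sum.elim_range, span_union, hspan, hwspan, hsup]
    · simp only [Fintype.sum_sum_type, Sum.elim_inl, Sum.elim_inr, Finset.sum_const,
        Finset.card_univ, Fintype.card_fin, smul_eq_mul, Finset.sum_range_succ, hfinrank]
      linarith

end LinearAlgebra

section Signals

variable {T : ℕ} {ι : Type*}

/-- The signal `f` on `{0, …, T - 1}`, extended by zero to all of `ℕ`, so that its time shifts can
be written without carrying bounds along. -/
def zeroExtend (f : Fin T → ι → ℝ) (t : ℕ) : ι → ℝ :=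
  if h : t < T then f ⟨t, h⟩ else 0

lemma zeroExtend_of_lt (f : Fin T → ι → ℝ) {t : ℕ} (ht : t < T) : zeroExtend f t = f ⟨t, ht⟩ :=
  dif_pos ht

lemma zeroExtend_val (f : Fin T → ι → ℝ) (t : Fin T) : zeroExtend f t = f t :=
  zeroExtend_of_lt f t.isLt

/-- The space of scalar signals spanned by the components (channels) of the vector signal `f`. -/
def channelSpan (f : Fin T → ι → ℝ) : Submodule ℝ (Fin T → ℝ) :=
  Submodule.span ℝ (Set.range fun i t => f t i)

lemma channelSpan_le_iff {f : Fin T → ι → ℝ} {S : Submodule ℝ (Fin T → ℝ)} :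
    channelSpan f ≤ S ↔ ∀ i, (fun t => f t i) ∈ S := by
  rw [channelSpan, Submodule.span_le, Set.range_subset_iff]
  rfl

variable [Fintype ι]

lemma channelSpan_eq_range_mulVecLin (f : Fin T → ι → ℝ) :
    channelSpan f = LinearMap.range (Matrix.of f).mulVecLin :=
  (range_mulVecLin _).symm

lemma mem_channelSpan_iff {f : Fin T → ι → ℝ} {g : Fin T → ℝ} :
    g ∈ channelSpan f ↔ ∃ c : ι → ℝ, ∀ t, g t = c ⬝ᵥ f t := by
  rw [channelSpan_eq_range_mulVecLin, LinearMap.mem_range]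
  refine exists_congr fun c => eq_comm.trans (funext_iff.trans (forall_congr' fun t => ?_))
  rw [dotProduct_comm]
  rfl

lemma dotProduct_mem_channelSpan (f : Fin T → ι → ℝ) (c : ι → ℝ) :
    (fun t => c ⬝ᵥ f t) ∈ channelSpan f :=
  mem_channelSpan_iff.2 ⟨c, fun _ => rfl⟩

end Signals

section Regressors

variable {m p T : ℕ} (u : Fin T → Fin m → ℝ) (y : Fin T → Fin p → ℝ) (k : ℕ)

/-- The row space of `G_k`: over windows of length `k + 1`, the combinations of the inputs
and of all but the last output. -/
def regressorSpace : Submodule ℝ (Fin (T - k) → ℝ) :=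
  Submodule.span ℝ (Set.range (Gmat u y k).row)

/-- The last block row of the output Hankel matrix of depth `k + 1`, the one that `G_k` lacks. -/
def lastOutputs : Matrix (Fin p) (Fin (T - k)) ℝ :=
  (hankel y k).submatrix (fun l => (Fin.last k, l)) id

/-- The functionals `η` for which `η ⬝ y` at the end of a window of length `k + 1` is a fixed linear
function of the inputs and of the earlier outputs in that window. -/
def predictableOutputs : Submodule ℝ (Fin p → ℝ) :=
  (regressorSpace u y k).comap (lastOutputs y k).vecMulLinear

variable {u y k}

lemma Gmat_row_inl (i : Fin (k + 1)) (l : Fin m) :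
    (Gmat u y k).row (Sum.inl (i, l)) = fun j : Fin (T - k) => zeroExtend u (j + i) l := by
  ext j
  rw [zeroExtend_of_lt u (by omega : (j : ℕ) + i < T)]
  simp [Gmat, hankel, add_comm]

lemma Gmat_row_inr (i : Fin k) (l : Fin p) :
    (Gmat u y k).row (Sum.inr (i, l)) = fun j : Fin (T - k) => zeroExtend y (j + i) l := by
  ext j
  rw [zeroExtend_of_lt y (by omega : (j : ℕ) + i < T)]
  simp [Gmat, add_comm]

lemma mem_predictableOutputs_iff {η : Fin p → ℝ} :
    η ∈ predictableOutputs u y k ↔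
      (fun j : Fin (T - k) => η ⬝ᵥ zeroExtend y (j + k)) ∈ regressorSpace u y k := by
  have hrow : (lastOutputs y k).vecMulLinear η =
      fun j : Fin (T - k) => η ⬝ᵥ zeroExtend y (j + k) := by
    ext j
    rw [zeroExtend_of_lt y (by omega : (j : ℕ) + k < T)]
    simp [lastOutputs, hankel, Matrix.vecMul, dotProduct, add_comm]
  rw [predictableOutputs, Submodule.mem_comap, hrow]

lemma input_mem_regressorSpace {i : ℕ} (hi : i ≤ k) (c : Fin m → ℝ) :
    (fun j : Fin (T - k) => c ⬝ᵥ zeroExtend u (j + i)) ∈ regressorSpace u y k := by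
  have hsum : (fun j : Fin (T - k) => c ⬝ᵥ zeroExtend u (j + i)) =
      ∑ l, c l • (Gmat u y k).row (Sum.inl (⟨i, by omega⟩, l)) := by
    ext j
    simp only [dotProduct, Finset.sum_apply, Pi.smul_apply, smul_eq_mul, Gmat_row_inl]
  rw [hsum]
  exact sum_mem fun l _ => Submodule.smul_mem _ _ (Submodule.subset_span ⟨_, rfl⟩)

lemma output_mem_regressorSpace {i : ℕ} (hi : i < k) (c : Fin p → ℝ) :
    (fun j : Fin (T - k) => c ⬝ᵥ zeroExtend y (j + i)) ∈ regressorSpace u y k := by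
  have hsum : (fun j : Fin (T - k) => c ⬝ᵥ zeroExtend y (j + i)) =
      ∑ l, c l • (Gmat u y k).row (Sum.inr (⟨i, hi⟩, l)) := by
    ext j
    simp only [dotProduct, Finset.sum_apply, Pi.smul_apply, smul_eq_mul, Gmat_row_inr]
  rw [hsum]
  exact sum_mem fun l _ => Submodule.smul_mem _ _ (Submodule.subset_span ⟨_, rfl⟩)

lemma exists_coeff_of_mem_predictableOutputs {η : Fin p → ℝ} (hη : η ∈ predictableOutputs u y k) :
    ∃ (a : ℕ → Fin p → ℝ) (b : ℕ → Fin m → ℝ), ∀ t, t + k < T →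
      η ⬝ᵥ zeroExtend y (t + k) = ∑ i ∈ Finset.range k, a i ⬝ᵥ zeroExtend y (t + i) +
        ∑ i ∈ Finset.range (k + 1), b i ⬝ᵥ zeroExtend u (t + i) := by
  obtain ⟨c, hc⟩ :=
    (Submodule.mem_span_range_iff_exists_fun ℝ).1 (mem_predictableOutputs_iff.1 hη)
  refine ⟨zeroExtend fun i l => c (Sum.inr (i, l)), zeroExtend fun i l => c (Sum.inl (i, l)),
    fun t ht => ?_⟩
  have hct := congrFun hc ⟨t, by omega⟩
  simp only [Fintype.sum_sum_type, Fintype.sum_prod_type, Gmat_row_inl, Gmat_row_inr,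
    Finset.sum_apply, Pi.smul_apply, smul_eq_mul] at hct
  rw [← hct, Finset.sum_range, Finset.sum_range, add_comm]
  simp only [zeroExtend_val (T := k), zeroExtend_val (T := k + 1), dotProduct]

lemma predictableOutputs_mono : Monotone (predictableOutputs u y) := by
  refine monotone_nat_of_le_succ fun k η hη => ?_
  obtain ⟨a, b, hab⟩ := exists_coeff_of_mem_predictableOutputs hη
  have hshift : (fun j : Fin (T - (k + 1)) => η ⬝ᵥ zeroExtend y (j + (k + 1))) =
      ∑ i ∈ Finset.range k, (fun j : Fin _ => a i ⬝ᵥ zeroExtend y (j + (i + 1))) +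
        ∑ i ∈ Finset.range (k + 1), fun j : Fin _ => b i ⬝ᵥ zeroExtend u (j + (i + 1)) := by
    ext j
    have hj := hab (j + 1) (by omega)
    simpa only [add_assoc, add_comm 1, Pi.add_apply, Finset.sum_apply] using hj
  rw [mem_predictableOutputs_iff, hshift]
  refine add_mem (sum_mem fun i hi => output_mem_regressorSpace ?_ _)
    (sum_mem fun i hi => input_mem_regressorSpace ?_ _)
  · exact Nat.succ_lt_succ (Finset.mem_range.1 hi)
  · exact Finset.mem_range.1 hi

variable (u y k)

lemma span_range_Hmat_row : Submodule.span ℝ (Set.range (Hmat u y k).row) =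
    regressorSpace u y k ⊔ LinearMap.range (lastOutputs y k).vecMulLinear := by
  have hH : Set.range (Hmat u y k).row =
      Set.range (hankel u k).row ∪ Set.range (hankel y k).row := Set.Sum.elim_range _ _
  have hG : Set.range (Gmat u y k).row = Set.range (hankel u k).row ∪
      Set.range fun il : Fin k × Fin p => (hankel y k).row (il.1.castSucc, il.2) :=
    Set.Sum.elim_range _ _
  rw [regressorSpace, range_vecMulLinear, hH, hG, Submodule.span_union, Submodule.span_union,
    span_range_fin_succ_prod (hankel y k).row, sup_assoc]
  rfl

lemma delta_add_finrank_predictableOutputs :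
    delta u y k + Module.finrank ℝ (predictableOutputs u y k) = p := by
  have hfinrank :=
    finrank_sup_range_add_finrank_comap (lastOutputs y k).vecMulLinear (regressorSpace u y k)
  have hle := Submodule.finrank_le (predictableOutputs u y k)
  rw [← span_range_Hmat_row, ← predictableOutputs] at hfinrank
  rw [Module.finrank_fin_fun] at hfinrank hle
  rw [delta, rank_eq_finrank_span_row, rank_eq_finrank_span_row, ← regressorSpace]
  omega

end Regressors

section Realization

lemma exists_delayLine {M : Type*} [AddCommGroup M] {T d : ℕ} {w : ℕ → M} {g : ℕ → ℕ → M}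
    (hw : ∀ t, t + d < T → w (t + d) = ∑ i ∈ Finset.range d, g i (t + i)) :
    ∃ X : ℕ → ℕ → M, (∀ t < T, X 0 t = w t) ∧ (∀ t, X d t = 0) ∧
      ∀ s t, X s (t + 1) = X (s + 1) t + g (d - 1 - s) t := by
  -- If the recursion held at all times, `X s t = w (t + s) - ∑ i < s, g (d - s + i) (t + i)` would
  -- do. So `w` is first continued beyond `T` by the recursion, and `d - s + i` is written in a form
  -- for which the last equation survives truncated subtraction when `s ≥ d`.
  let w' : ℕ → M := fun r => if r < T then w r else ∑ i ∈ Finset.range d, g i (r - d + i)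
  have hw' : ∀ t, w' (t + d) = ∑ i ∈ Finset.range d, g i (t + i) := by
    intro t
    by_cases ht : t + d < T
    · simp only [w', if_pos ht, hw t ht]
    · simp only [w', if_neg ht, Nat.add_sub_cancel]
  refine ⟨fun s t => w' (t + s) - ∑ i ∈ Finset.range s, g (d - 1 - (s - 1 - i)) (t + i),
    fun t ht => ?_, fun t => ?_, fun s t => ?_⟩
  · simp [w', ht]
  · beta_reduce
    rw [hw', sub_eq_zero]
    refine Finset.sum_congr rfl fun i hi => ?_
    rw [Nat.sub_sub_self (Nat.le_sub_one_of_lt (Finset.mem_range.1 hi))]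
  · have hterm : ∀ i, g (d - 1 - (s + 1 - 1 - (i + 1))) (t + (i + 1)) =
        g (d - 1 - (s - 1 - i)) (t + 1 + i) := by
      intro i
      congr 1 <;> omega
    beta_reduce
    rw [Finset.sum_range_succ', Finset.sum_congr rfl fun i _ => hterm i, add_right_comm t 1 s,
      add_assoc t s 1]
    simp only [Nat.add_sub_cancel, Nat.sub_zero, add_zero]
    abel

variable {m p T : ℕ} {u : Fin T → Fin m → ℝ} {y : Fin T → Fin p → ℝ}

lemma exists_stateChain {k : ℕ} {η : Fin p → ℝ} (hη : η ∈ predictableOutputs u y k) :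
    ∃ X : ℕ → ℕ → ℝ, (fun t : Fin T => η ⬝ᵥ y t - X 0 t) ∈ channelSpan u ∧ (∀ t, X k t = 0) ∧
      ∀ s, (fun t : Fin T => X s (t + 1) - X (s + 1) t) ∈ channelSpan y ⊔ channelSpan u := by
  obtain ⟨a, b, hab⟩ := exists_coeff_of_mem_predictableOutputs hη
  obtain ⟨X, hX0, hXk, hXs⟩ := exists_delayLine (T := T) (d := k)
    (w := fun t => η ⬝ᵥ zeroExtend y t - b k ⬝ᵥ zeroExtend u t)
    (g := fun i t => a i ⬝ᵥ zeroExtend y t + b i ⬝ᵥ zeroExtend u t) fun t ht => by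
      rw [hab t ht, Finset.sum_range_succ, Finset.sum_add_distrib]
      ring
  refine ⟨X, ?_, hXk, fun s => ?_⟩
  · convert dotProduct_mem_channelSpan u (b k) using 2 with t
    rw [hX0 t t.isLt, zeroExtend_val, zeroExtend_val, sub_sub_cancel]
  · convert Submodule.add_mem_sup (dotProduct_mem_channelSpan y (a (k - 1 - s)))
      (dotProduct_mem_channelSpan u (b (k - 1 - s))) using 1
    ext t
    rw [hXs, zeroExtend_val, zeroExtend_val, add_sub_cancel_left, Pi.add_apply]

lemma exists_explains_of_channelSpan_le {ι : Type*} [Fintype ι] {x : Fin (T + 1) → ι → ℝ}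
    (hx : channelSpan (fun t => x t.succ) ≤ channelSpan (fun t => x t.castSucc) ⊔ channelSpan u)
    (hy : channelSpan y ≤ channelSpan (fun t => x t.castSucc) ⊔ channelSpan u) :
    ∃ (A : Matrix ι ι ℝ) (B : Matrix ι (Fin m) ℝ) (C : Matrix (Fin p) ι ℝ)
      (D : Matrix (Fin p) (Fin m) ℝ), Explains A B C D u y x := by
  have hcoeff : ∀ f ∈ channelSpan (fun t => x t.castSucc) ⊔ channelSpan u,
      ∃ (a : ι → ℝ) (b : Fin m → ℝ), ∀ t, f t = a ⬝ᵥ x t.castSucc + b ⬝ᵥ u t := by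
    intro f hf
    obtain ⟨f₁, hf₁, f₂, hf₂, rfl⟩ := Submodule.mem_sup.1 hf
    obtain ⟨a, ha⟩ := mem_channelSpan_iff.1 hf₁
    obtain ⟨b, hb⟩ := mem_channelSpan_iff.1 hf₂
    exact ⟨a, b, fun t => congrArg₂ (· + ·) (ha t) (hb t)⟩
  choose A B hAB using fun i => hcoeff _ (channelSpan_le_iff.1 hx i)
  choose C D hCD using fun i => hcoeff _ (channelSpan_le_iff.1 hy i)
  exact ⟨A, B, C, D, fun t => ⟨funext fun i => hAB i t, funext fun i => hCD i t⟩⟩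

lemma exists_explains_of_span_predictableOutputs {κ : Type*} [Fintype κ] {η : κ → Fin p → ℝ}
    {d : κ → ℕ} (hη : ∀ j, η j ∈ predictableOutputs u y (d j))
    (hspan : Submodule.span ℝ (Set.range η) = ⊤) :
    ∃ (A : Matrix (Σ j, Fin (d j)) (Σ j, Fin (d j)) ℝ) (B : Matrix (Σ j, Fin (d j)) (Fin m) ℝ)
      (C : Matrix (Fin p) (Σ j, Fin (d j)) ℝ) (D : Matrix (Fin p) (Fin m) ℝ)
      (x : Fin (T + 1) → (Σ j, Fin (d j)) → ℝ), Explains A B C D u y x := by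
  choose X hX0 hXd hXs using fun j => exists_stateChain (hη j)
  let x : Fin (T + 1) → (Σ j, Fin (d j)) → ℝ := fun t s => X s.1 s.2 t
  let L := channelSpan (fun t => x t.castSucc) ⊔ channelSpan u
  have hX : ∀ j s, s ≤ d j → (fun t : Fin T => X j s t) ∈ L := by
    intro j s hs
    rcases hs.lt_or_eq with hlt | rfl
    · exact Submodule.mem_sup_left (Submodule.subset_span ⟨⟨j, s, hlt⟩, rfl⟩)
    · simp only [hXd]
      exact zero_mem L
  have hy : channelSpan y ≤ L := by
    rw [channelSpan_eq_range_mulVecLin, LinearMap.range_eq_map, ← hspan, Submodule.map_span_le]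
    rintro _ ⟨j, rfl⟩
    convert add_mem (Submodule.mem_sup_right (hX0 j)) (hX j 0 (Nat.zero_le _)) using 1
    ext t
    simp [Matrix.mulVec, dotProduct_comm]
  have hx : channelSpan (fun t => x t.succ) ≤ L := by
    rw [channelSpan_le_iff]
    rintro ⟨j, s⟩
    convert add_mem (sup_le hy le_sup_right (hXs j s)) (hX j (s + 1) s.isLt) using 1
    ext t
    simp [x]
  obtain ⟨A, B, C, D, h⟩ := exists_explains_of_channelSpan_le hx hy
  exact ⟨A, B, C, D, x, h⟩

lemma Explains.reindex {ι κ : Type*} [Fintype ι] [Fintype κ] {A : Matrix ι ι ℝ}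
    {B : Matrix ι (Fin m) ℝ} {C : Matrix (Fin p) ι ℝ} {D : Matrix (Fin p) (Fin m) ℝ}
    {x : Fin (T + 1) → ι → ℝ} (h : Explains A B C D u y x) (e : κ ≃ ι) :
    Explains (A.submatrix e e) (B.submatrix e id) (C.submatrix id e) D u y (fun t => x t ∘ e) := by
  intro t
  obtain ⟨hstate, houtput⟩ := h t
  constructor
  · ext i
    simp [submatrix_mulVec_equiv, Function.comp_assoc, hstate, Matrix.mulVec]
  · ext i
    simp [submatrix_mulVec_equiv, Function.comp_assoc, houtput]

end Realization

section DataInvariants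

variable {m p T : ℕ} (u : Fin T → Fin m → ℝ) (y : Fin T → Fin p → ℝ)

/-- The number `q` of the paper, the least `k` with `δ_k = 0`. -/
def dataLag : ℕ := sInf {k | delta u y k = 0}

/-- The state dimension `∑ δ_i` of a minimal realization. The sum runs over `i < q` only, as
`δ_q = 0`. -/
def dataOrder : ℕ := ∑ i ∈ Finset.range (dataLag u y), delta u y i

lemma delta_length : delta u y T = 0 := by
  have hrank : (Hmat u y T).rank = 0 :=
    Nat.le_zero.1 ((Hmat u y T).rank_le_card_width.trans_eq (by simp))
  rw [delta, hrank, Nat.zero_sub]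

lemma delta_dataLag : delta u y (dataLag u y) = 0 :=
  Nat.sInf_mem (s := {k | delta u y k = 0}) ⟨T, delta_length u y⟩

lemma dataLag_le_dataOrder : dataLag u y ≤ dataOrder u y := by
  have hpos : ∀ i ∈ Finset.range (dataLag u y), 1 ≤ delta u y i := by
    intro i hi
    have hne : i ∉ {k | delta u y k = 0} := Nat.notMem_of_lt_sInf (Finset.mem_range.1 hi)
    exact Nat.one_le_iff_ne_zero.2 hne
  simpa [dataOrder] using Finset.card_nsmul_le_sum _ _ 1 hpos

lemma exists_explains_dataOrder :
    ∃ (A : Matrix (Fin (dataOrder u y)) (Fin (dataOrder u y)) ℝ)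
      (B : Matrix (Fin (dataOrder u y)) (Fin m) ℝ) (C : Matrix (Fin p) (Fin (dataOrder u y)) ℝ)
      (D : Matrix (Fin p) (Fin m) ℝ) (x : Fin (T + 1) → Fin (dataOrder u y) → ℝ),
      Explains A B C D u y x := by
  obtain ⟨κ, _, η, d, hη, hspan, hsum⟩ :=
    exists_span_range_eq_of_flag (predictableOutputs_mono (u := u) (y := y)) (dataLag u y)
  have hfinrank : Module.finrank ℝ (predictableOutputs u y (dataLag u y)) = p := by
    simpa [delta_dataLag] using delta_add_finrank_predictableOutputs u y (dataLag u y)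
  have htop : predictableOutputs u y (dataLag u y) = ⊤ :=
    Submodule.eq_top_of_finrank_eq (by rw [hfinrank, Module.finrank_fin_fun])
  have hcard : ∑ j, d j = dataOrder u y := by
    have hdelta : dataOrder u y + ∑ i ∈ Finset.range (dataLag u y),
        Module.finrank ℝ (predictableOutputs u y i) = dataLag u y * p := by
      simp [dataOrder, ← Finset.sum_add_distrib, delta_add_finrank_predictableOutputs]
    rw [hfinrank] at hsum
    omega
  obtain ⟨A, B, C, D, x, h⟩ := exists_explains_of_span_predictableOutputs hη (hspan.trans htop)
  exact ⟨_, _, _, _, _, h.reindex (Fintype.equivFinOfCardEq (by simp [hcard])).symm⟩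

end DataInvariants

section Observability

variable {ι : Type*} [Fintype ι] [DecidableEq ι] {p : ℕ} (A : Matrix ι ι ℝ) (C : Matrix (Fin p) ι ℝ)

/-- The row space of `Ω_{k-1}`, so that `obsSpace A C 0 = ⊥`. -/
def obsSpace (k : ℕ) : Submodule ℝ (ι → ℝ) :=
  Submodule.span ℝ (Set.range fun ir : Fin k × Fin p => (C * A ^ (ir.1 : ℕ)).row ir.2)

lemma obsRank_eq_finrank_obsSpace (k : ℕ) : obsRank A C k = Module.finrank ℝ (obsSpace A C k) := by
  cases k with
  | zero => rw [obsSpace, Set.range_eq_empty, Submodule.span_empty, finrank_bot, obsRank]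
  | succ k => exact rank_eq_finrank_span_row _

lemma obsSpace_succ (k : ℕ) :
    obsSpace A C (k + 1) = obsSpace A C k ⊔ LinearMap.range (C * A ^ k).vecMulLinear := by
  rw [obsSpace, span_range_fin_succ_prod, range_vecMulLinear]
  rfl

lemma obsRank_mono : Monotone (obsRank A C) := by
  refine monotone_nat_of_le_succ fun k => ?_
  rw [obsRank_eq_finrank_obsSpace, obsRank_eq_finrank_obsSpace, obsSpace_succ]
  exact Submodule.finrank_mono le_sup_left

lemma obsRank_le_card (k : ℕ) : obsRank A C k ≤ Fintype.card ι := by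
  rw [obsRank_eq_finrank_obsSpace, ← Module.finrank_fintype_fun_eq_card ℝ]
  exact Submodule.finrank_le _

lemma rho_add_finrank_comap_obsSpace (k : ℕ) :
    rho A C k + Module.finrank ℝ ((obsSpace A C k).comap (C * A ^ k).vecMulLinear) = p := by
  have hfinrank := finrank_sup_range_add_finrank_comap (C * A ^ k).vecMulLinear (obsSpace A C k)
  have hmono : obsRank A C k ≤ obsRank A C (k + 1) := obsRank_mono A C k.le_succ
  rw [← obsSpace_succ, ← obsRank_eq_finrank_obsSpace, ← obsRank_eq_finrank_obsSpace,
    Module.finrank_fin_fun] at hfinrank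
  rw [rho]
  omega

lemma rho_lag : rho A C (lag A C) = 0 := by
  obtain ⟨r, k, hk⟩ := converges_of_monotone_of_bounded (obsRank_mono A C) (obsRank_le_card A C)
  have hlag : obsRank A C (lag A C + 1) = obsRank A C (lag A C) :=
    Nat.sInf_mem (s := {k | obsRank A C (k + 1) = obsRank A C k})
      ⟨k, (hk (k + 1) k.le_succ).trans (hk k le_rfl).symm⟩
  rw [rho, hlag, Nat.sub_self]

end Observability

namespace Explains

variable {ι : Type*} [Fintype ι] {m p T : ℕ} {A : Matrix ι ι ℝ}
  {B : Matrix ι (Fin m) ℝ} {C : Matrix (Fin p) ι ℝ} {D : Matrix (Fin p) (Fin m) ℝ}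
  {u : Fin T → Fin m → ℝ} {y : Fin T → Fin p → ℝ} {x : Fin (T + 1) → ι → ℝ}

lemma zeroExtend_state (h : Explains A B C D u y x) {t : ℕ} (ht : t < T) :
    zeroExtend x (t + 1) = A *ᵥ zeroExtend x t + B *ᵥ zeroExtend u t := by
  rw [zeroExtend_of_lt x (Nat.succ_lt_succ ht), zeroExtend_of_lt x (Nat.lt_succ_of_lt ht),
    zeroExtend_of_lt u ht]
  exact (h ⟨t, ht⟩).1

lemma zeroExtend_output (h : Explains A B C D u y x) {t : ℕ} (ht : t < T) :
    zeroExtend y t = C *ᵥ zeroExtend x t + D *ᵥ zeroExtend u t := by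
  rw [zeroExtend_of_lt y ht, zeroExtend_of_lt x (Nat.lt_succ_of_lt ht), zeroExtend_of_lt u ht]
  exact (h ⟨t, ht⟩).2

section DecidableEq

variable [DecidableEq ι]

lemma state_sub_mem_regressorSpace (h : Explains A B C D u y x) {k i : ℕ} (hi : i ≤ k)
    (w : ι → ℝ) :
    (fun j : Fin (T - k) => w ⬝ᵥ zeroExtend x (j + i) - (w ᵥ* A ^ i) ⬝ᵥ zeroExtend x j) ∈
      regressorSpace u y k := by
  induction i generalizing w with
  | zero =>
    simp only [add_zero, pow_zero, vecMul_one, sub_self]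
    exact zero_mem _
  | succ i ih =>
    convert add_mem (ih (Nat.le_of_succ_le hi) (w ᵥ* A))
      (input_mem_regressorSpace (Nat.le_of_succ_le hi) (w ᵥ* B)) using 1
    ext j
    rw [← add_assoc, h.zeroExtend_state (by omega)]
    simp only [Pi.add_apply, dotProduct_add, dotProduct_mulVec, pow_succ', vecMul_vecMul]
    ring

lemma output_sub_mem_regressorSpace (h : Explains A B C D u y x) {k i : ℕ} (hi : i ≤ k)
    (c : Fin p → ℝ) :
    (fun j : Fin (T - k) => c ⬝ᵥ zeroExtend y (j + i) - (c ᵥ* (C * A ^ i)) ⬝ᵥ zeroExtend x j) ∈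
      regressorSpace u y k := by
  convert add_mem (h.state_sub_mem_regressorSpace hi (c ᵥ* C))
    (input_mem_regressorSpace hi (c ᵥ* D)) using 1
  ext j
  rw [h.zeroExtend_output (by omega)]
  simp only [Pi.add_apply, dotProduct_add, dotProduct_mulVec, vecMul_vecMul]
  ring

lemma dotProduct_state_mem_regressorSpace (h : Explains A B C D u y x) {k : ℕ} {v : ι → ℝ}
    (hv : v ∈ obsSpace A C k) :
    (fun j : Fin (T - k) => v ⬝ᵥ zeroExtend x j) ∈ regressorSpace u y k := by
  induction hv using Submodule.span_induction with
  | mem v hv =>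
    obtain ⟨⟨i, r⟩, rfl⟩ := hv
    convert sub_mem (output_mem_regressorSpace i.isLt (Pi.single r 1))
      (h.output_sub_mem_regressorSpace i.isLt.le (Pi.single r 1)) using 1
    ext j
    simp only [Pi.sub_apply, sub_sub_cancel, single_one_vecMul]
  | zero =>
    simp only [zero_dotProduct]
    exact zero_mem _
  | add v w _ _ hv hw =>
    simp only [add_dotProduct]
    exact add_mem hv hw
  | smul c v _ hv =>
    simp only [smul_dotProduct]
    exact Submodule.smul_mem _ c hv

lemma comap_obsSpace_le_predictableOutputs (h : Explains A B C D u y x) (k : ℕ) :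
    (obsSpace A C k).comap (C * A ^ k).vecMulLinear ≤ predictableOutputs u y k := by
  intro η hη
  rw [mem_predictableOutputs_iff]
  convert add_mem (h.output_sub_mem_regressorSpace le_rfl η)
    (h.dotProduct_state_mem_regressorSpace hη) using 1
  ext j
  simp

lemma delta_le_rho (h : Explains A B C D u y x) (k : ℕ) : delta u y k ≤ rho A C k := by
  have hdelta := delta_add_finrank_predictableOutputs u y k
  have hrho := rho_add_finrank_comap_obsSpace A C k
  have hle := Submodule.finrank_mono (h.comap_obsSpace_le_predictableOutputs k)
  omega

lemma sum_delta_le_obsRank (h : Explains A B C D u y x) (k : ℕ) :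
    ∑ i ∈ Finset.range k, delta u y i ≤ obsRank A C k :=
  calc ∑ i ∈ Finset.range k, delta u y i
      ≤ ∑ i ∈ Finset.range k, rho A C i := Finset.sum_le_sum fun i _ => h.delta_le_rho i
    _ = obsRank A C k := Finset.sum_range_tsub (obsRank_mono A C) k

lemma dataLag_le_lag (h : Explains A B C D u y x) : dataLag u y ≤ lag A C :=
  Nat.sInf_le (Nat.le_zero.1 ((h.delta_le_rho _).trans_eq (rho_lag A C)))

lemma obsRank_eq_card (h : Explains A B C D u y x) (hcard : Fintype.card ι = dataOrder u y)
    {k : ℕ} (hk : dataLag u y ≤ k) : obsRank A C k = Fintype.card ι :=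
  (obsRank_le_card A C k).antisymm <|
    hcard.trans_le <| (h.sum_delta_le_obsRank _).trans (obsRank_mono A C hk)

lemma lag_eq_dataLag (h : Explains A B C D u y x) (hcard : Fintype.card ι = dataOrder u y) :
    lag A C = dataLag u y :=
  le_antisymm (Nat.sInf_le <| (h.obsRank_eq_card hcard (Nat.le_succ _)).trans
    (h.obsRank_eq_card hcard le_rfl).symm) h.dataLag_le_lag

lemma observable (h : Explains A B C D u y x) (hcard : Fintype.card ι = dataOrder u y) :
    Observable A C :=
  h.obsRank_eq_card hcard (hcard ▸ dataLag_le_dataOrder u y)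

end DecidableEq

lemma dataOrder_le_card (h : Explains A B C D u y x) : dataOrder u y ≤ Fintype.card ι := by
  classical
  exact (h.sum_delta_le_obsRank _).trans (obsRank_le_card A C _)

end Explains

section Minimality

variable {m p T : ℕ} (u : Fin T → Fin m → ℝ) (y : Fin T → Fin p → ℝ)

/-- The lags of the systems explaining the data, i.e. the `ℓ` with `𝓔(ℓ, n) ≠ ∅` for some `n`. -/
def explainingLags : Set ℕ :=
  {ℓ | ∃ n, ∃ A : Matrix (Fin n) (Fin n) ℝ,
    ∃ B : Matrix (Fin n) (Fin m) ℝ, ∃ C : Matrix (Fin p) (Fin n) ℝ,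
    ∃ D : Matrix (Fin p) (Fin m) ℝ, ∃ x : Fin (T + 1) → Fin n → ℝ,
    Explains A B C D u y x ∧ lag A C = ℓ}

/-- The state dimensions of the systems explaining the data, i.e. the `n` with `𝓔(n) ≠ ∅`. -/
def explainingOrders : Set ℕ :=
  {n | ∃ A : Matrix (Fin n) (Fin n) ℝ,
    ∃ B : Matrix (Fin n) (Fin m) ℝ, ∃ C : Matrix (Fin p) (Fin n) ℝ,
    ∃ D : Matrix (Fin p) (Fin m) ℝ, ∃ x : Fin (T + 1) → Fin n → ℝ,
    Explains A B C D u y x}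

lemma isLeast_explainingLags : IsLeast (explainingLags u y) (dataLag u y) := by
  obtain ⟨A, B, C, D, x, h⟩ := exists_explains_dataOrder u y
  refine ⟨⟨_, A, B, C, D, x, h, h.lag_eq_dataLag (Fintype.card_fin _)⟩, ?_⟩
  rintro _ ⟨n, A, B, C, D, x, h, rfl⟩
  exact h.dataLag_le_lag

lemma isLeast_explainingOrders : IsLeast (explainingOrders u y) (dataOrder u y) := by
  refine ⟨exists_explains_dataOrder u y, ?_⟩
  rintro n ⟨A, B, C, D, x, h⟩
  exact h.dataOrder_le_card.trans_eq (Fintype.card_fin n)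

end Minimality

theorem stmt17 {m p T : ℕ}
    (u : Fin T → Fin m → ℝ) (y : Fin T → Fin p → ℝ)
    (hu : u ≠ 0) (hT : 1 ≤ T) :
    letI q := sInf {k | delta u y k = 0}
    letI lmin := sInf {ℓ | ∃ n, ∃ A : Matrix (Fin n) (Fin n) ℝ,
      ∃ B : Matrix (Fin n) (Fin m) ℝ, ∃ C : Matrix (Fin p) (Fin n) ℝ,
      ∃ D : Matrix (Fin p) (Fin m) ℝ, ∃ x : Fin (T + 1) → Fin n → ℝ,
      Explains A B C D u y x ∧ lag A C = ℓ}
    letI nmin := sInf {n | ∃ A : Matrix (Fin n) (Fin n) ℝ,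
      ∃ B : Matrix (Fin n) (Fin m) ℝ, ∃ C : Matrix (Fin p) (Fin n) ℝ,
      ∃ D : Matrix (Fin p) (Fin m) ℝ, ∃ x : Fin (T + 1) → Fin n → ℝ,
      Explains A B C D u y x}
    lmin = q ∧
    nmin = ∑ i ∈ Finset.range (lmin + 1), delta u y i ∧
    ∀ (A : Matrix (Fin nmin) (Fin nmin) ℝ) (B : Matrix (Fin nmin) (Fin m) ℝ)
      (C : Matrix (Fin p) (Fin nmin) ℝ) (D : Matrix (Fin p) (Fin m) ℝ)
      (x : Fin (T + 1) → Fin nmin → ℝ),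
      Explains A B C D u y x → lag A C = lmin ∧ Observable A C := by
  have hlag : sInf (explainingLags u y) = dataLag u y := (isLeast_explainingLags u y).csInf_eq
  have horder : sInf (explainingOrders u y) = dataOrder u y :=
    (isLeast_explainingOrders u y).csInf_eq
  refine ⟨hlag, ?_, fun A B C D x h => ?_⟩
  · change sInf (explainingOrders u y) =
      ∑ i ∈ Finset.range (sInf (explainingLags u y) + 1), delta u y i
    rw [hlag, horder, Finset.sum_range_succ, delta_dataLag, add_zero, dataOrder]
  · have hcard := (Fintype.card_fin _).trans horder
    exact ⟨(h.lag_eq_dataLag hcard).trans hlag.symm, h.observable hcard⟩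
end
end
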